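/- For every (P', λ') ∈ P_d × (0,1) there exists an integer N ≥ 1 such that, for every sufficiently small ε > 0, every itinerary in I_N^ε = I_N^ε(P',λ') contains at least 3 distinct symbols among {1, …, d}. -/

import Mathlib

open MeasureTheory Set Filter Metric

noncomputable section

/-- Planar cross product of two complex numbers viewed as vectors of `ℝ²`. -/
def cross (z w : ℂ) : ℝ := z.re * w.im - z.im * w.re

/-- `v` is the tuple of vertices of a convex `d`-gon, cyclically ordered
(counterclockwise): every vertex lies strictly to the left of every directed edge. -/
def IsConvexPolygon {d : ℕ} [NeZero d] (v : Fin d → ℂ) : Prop :=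
  ∀ i j : Fin d, j ≠ i → j ≠ i + 1 → 0 < cross (v (i + 1) - v i) (v j - v i)

/-- The polygon `P`, as a subset of the plane. -/
def polygonSet {d : ℕ} (v : Fin d → ℂ) : Set ℂ := convexHull ℝ (Set.range v)

/-- The open cone `A k`: points `z` outside `P` whose supporting line (oriented from `z`
towards the polygon, with the interior of `P` on its left) meets `P` exactly at the
vertex `v k`. -/
def cone {d : ℕ} (v : Fin d → ℂ) (k : Fin d) : Set ℂ :=
  {z | ∀ j : Fin d, j ≠ k → 0 < cross (v k - z) (v j - z)}

/-- The singular set `S_P`: the points of `X = ℂ \ P` lying in no cone, i.e. whose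
supporting line contains an edge of the polygon. -/
def singSet {d : ℕ} (v : Fin d → ℂ) : Set ℂ :=
  {z | z ∉ polygonSet v ∧ ∀ k : Fin d, z ∉ cone v k}

/-- The outer billiard map of the polygon with vertices `v` with contraction `lam`:
on the cone `A k` it is `z ↦ -lam • z + (1+lam) • v k` (extended arbitrarily outside
the union of the cones, which is its actual domain `X \ S_P`). -/
def billiardMap {d : ℕ} (v : Fin d → ℂ) (lam : ℝ) (z : ℂ) : ℂ :=
  haveI := Classical.propDecidable (∃ k : Fin d, z ∈ cone v k)
  if h : ∃ k : Fin d, z ∈ cone v k then -(lam : ℂ) * z + (1 + (lam : ℂ)) * v h.choose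
  else z

/-- A point is non-singular if its whole forward orbit stays in the union of the open
cones, i.e. never meets the singular set. -/
def NonSingular {d : ℕ} (v : Fin d → ℂ) (lam : ℝ) (z : ℂ) : Prop :=
  ∀ n : ℕ, (billiardMap v lam)^[n] z ∈ ⋃ k : Fin d, cone v k

/-- The ω-limit set of the forward orbit of `z` under `f`. -/
def omegaSet (f : ℂ → ℂ) (z : ℂ) : Set ℂ :=
  ⋂ m : ℕ, closure ((fun n : ℕ => f^[n] z) '' {n | m ≤ n})

/-- The outer billiard map with contraction is asymptotically periodic: it has finitely
many periodic orbits (equivalently, periodic points) and the ω-limit set of every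
non-singular point is a periodic orbit. -/
def AsymptoticallyPeriodic {d : ℕ} (v : Fin d → ℂ) (lam : ℝ) : Prop :=
  {z : ℂ | NonSingular v lam z ∧ ∃ p : ℕ, 1 ≤ p ∧ (billiardMap v lam)^[p] z = z}.Finite ∧
  ∀ z : ℂ, NonSingular v lam z → ∃ w : ℂ, NonSingular v lam w ∧
    (∃ p : ℕ, 1 ≤ p ∧ (billiardMap v lam)^[p] w = w) ∧
    omegaSet (billiardMap v lam) z = Set.range fun n : ℕ => (billiardMap v lam)^[n] w

/-- The `ε`-neighbourhood `Δ_ε = B_ε(P') × (λ'-ε, λ'+ε)` of `(P', λ')`. -/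
def Delta {d : ℕ} (v' : Fin d → ℂ) (l' ε : ℝ) : Set ((Fin d → ℂ) × ℝ) :=
  Metric.ball v' ε ×ˢ Set.Ioo (l' - ε) (l' + ε)

/-- `a_ε = λ' + ε`. -/
def aEps (l' ε : ℝ) : ℝ := l' + ε

/-- `b_ε = sup {‖P‖ : P ∈ B_ε(P')}` (sup-norm of the vertex tuple). -/
def bEps {d : ℕ} (v' : Fin d → ℂ) (ε : ℝ) : ℝ :=
  sSup ((fun w : Fin d → ℂ => ‖w‖) '' Metric.ball v' ε)

/-- `r_ε = b_ε (1+a_ε)/(1-a_ε)²`. -/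
def rEps {d : ℕ} (v' : Fin d → ℂ) (l' ε : ℝ) : ℝ :=
  bEps v' ε * (1 + aEps l' ε) / (1 - aEps l' ε) ^ 2

/-- `K_ε`: the closed disc of radius `r_ε` centred at the origin. -/
def Keps {d : ℕ} (v' : Fin d → ℂ) (l' ε : ℝ) : Set ℂ :=
  Metric.closedBall (0 : ℂ) (rEps v' l' ε)

/-- `(i 0, …, i (n-1))` is an admissible itinerary of order `n` of `T_{w,lam}`, the
cones being restricted to `K_ε`: the corresponding intersection
`A_{i_0} ∩ T⁻¹(A_{i_1}) ∩ ⋯ ∩ T^{-(n-1)}(A_{i_{n-1}})` is non-empty. -/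
def Admissible {d : ℕ} (v' : Fin d → ℂ) (l' ε : ℝ) (w : Fin d → ℂ) (lam : ℝ)
    {n : ℕ} (i : Fin n → Fin d) : Prop :=
  ∃ z : ℂ, ∀ j : Fin n, (billiardMap w lam)^[(j : ℕ)] z ∈ cone w (i j) ∩ Keps v' l' ε

/-- `I_n^ε`: the itineraries of order `n` admissible for some `(P, λ) ∈ Δ_ε`. -/
def ItinSet {d : ℕ} (v' : Fin d → ℂ) (l' ε : ℝ) (n : ℕ) : Set (Fin n → Fin d) :=
  {i | ∃ q ∈ Delta v' l' ε, Admissible v' l' ε q.1 q.2 i}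

/-- `H(P, λ, i) = (1+λ) ∑_{j=0}^{n-1} (-λ)^{n-j-1} v_{i_j}`. -/
def Hpt {d : ℕ} (w : Fin d → ℂ) (lam : ℝ) {n : ℕ} (i : Fin n → Fin d) : ℂ :=
  (1 + (lam : ℂ)) * ∑ j : Fin n, (-(lam : ℂ)) ^ (n - (j : ℕ) - 1) * w (i j)

/-- The limit set `Λ_ε(P,λ) = ⋂_{m ≥ 1} closure (⋃_{n ≥ m} {H(P,λ,i) : i ∈ I_n^ε})`. -/
def LamSet {d : ℕ} (v' : Fin d → ℂ) (l' ε : ℝ) (w : Fin d → ℂ) (lam : ℝ) : Set ℂ :=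
  ⋂ m : ℕ, ⋂ (_ : 1 ≤ m),
    closure {z : ℂ | ∃ n : ℕ, m ≤ n ∧ ∃ i ∈ ItinSet v' l' ε n, Hpt w lam i = z}

/-- `ω(P,λ)`: the union of the ω-limit sets of all non-singular points. -/
def omegaUnion {d : ℕ} (w : Fin d → ℂ) (lam : ℝ) : Set ℂ :=
  ⋃ z : ℂ, ⋃ (_ : NonSingular w lam z), omegaSet (billiardMap w lam) z

lemma cross_abs_le (z w : ℂ) : |cross z w| ≤ 2 * ‖z‖ * ‖w‖ := by
  unfold cross
  have h1 : |z.re * w.im| ≤ ‖z‖ * ‖w‖ := by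
    rw [abs_mul]
    exact mul_le_mul (Complex.abs_re_le_norm z) (Complex.abs_im_le_norm w) (abs_nonneg _)
      (norm_nonneg _)
  have h2 : |z.im * w.re| ≤ ‖z‖ * ‖w‖ := by
    rw [abs_mul]
    exact mul_le_mul (Complex.abs_im_le_norm z) (Complex.abs_re_le_norm w) (abs_nonneg _)
      (norm_nonneg _)
  have h3 := abs_sub (z.re * w.im) (z.im * w.re)
  linarith

lemma cone_unique {d : ℕ} {v : Fin d → ℂ} {k l : Fin d} {z : ℂ} (hk : z ∈ cone v k)
    (hl : z ∈ cone v l) : k = l := by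
  by_contra h
  have h1 := hk l (Ne.symm h)
  have h2 := hl k h
  unfold cross at h1 h2
  linarith

lemma billiardMap_eq {d : ℕ} {v : Fin d → ℂ} {k : Fin d} {z : ℂ} (lam : ℝ)
    (hk : z ∈ cone v k) :
    billiardMap v lam z = -(lam : ℂ) * z + (1 + (lam : ℂ)) * v k := by
  have h : ∃ k : Fin d, z ∈ cone v k := ⟨k, hk⟩
  unfold billiardMap
  rw [dif_pos h, cone_unique h.choose_spec hk]

/-- Two consecutive symbols differ. -/
lemma consecutive_ne {d : ℕ} {v : Fin d → ℂ} {k c : Fin d} (hc : c ≠ k) {z : ℂ} {lam : ℝ}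
    (hlam : 0 < lam) (hk : z ∈ cone v k) :
    -(lam : ℂ) * z + (1 + (lam : ℂ)) * v k ∉ cone v k := by
  intro h
  have h1 := hk c hc
  have h2 := h c hc
  simp only [cross, Complex.sub_re, Complex.sub_im, Complex.add_re, Complex.add_im,
    Complex.mul_re, Complex.mul_im, Complex.neg_re, Complex.neg_im, Complex.ofReal_re,
    Complex.ofReal_im, Complex.one_re, Complex.one_im] at h1 h2
  have h3 := mul_pos hlam h1
  nlinarith

lemma exists_third {d : ℕ} [NeZero d] (hd : 3 ≤ d) (vP : Fin d → ℂ)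
    (hconv : IsConvexPolygon vP) :
    ∃ δ : ℝ, 0 < δ ∧ ∃ η : ℝ, 0 < η ∧ ∀ w ∈ Metric.ball vP η, ∀ a b : Fin d, a ≠ b →
      ∃ c : Fin d, c ≠ a ∧ c ≠ b ∧ δ < |cross (w b - w a) (w c - w a)| := by
  have key : ∀ a b : Fin d, a ≠ b → ∃ c : Fin d, c ≠ a ∧ c ≠ b ∧
      0 < |cross (vP b - vP a) (vP c - vP a)| := by
    intro a b hab
    by_cases hb : b = a + 1
    · obtain ⟨c, hc⟩ : ∃ c : Fin d, c ∉ ({a, b} : Finset (Fin d)) := by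
        by_contra! hcon
        have h1 : (Finset.univ : Finset (Fin d)) ⊆ {a, b} := fun x _ => hcon x
        have h2 := Finset.card_le_card h1
        have h3 := Finset.card_le_two (a := a) (b := b)
        simp only [Finset.card_univ, Fintype.card_fin] at h2
        omega
      simp only [Finset.mem_insert, Finset.mem_singleton, not_or] at hc
      refine ⟨c, hc.1, hc.2, ?_⟩
      have := hconv a c hc.1 (hb ▸ hc.2)
      rw [hb]
      exact abs_pos.2 this.ne'
    · have ha : a + 1 ≠ a := by
        intro h
        have h1 : (1 : Fin d) = 0 := by simpa using h
        rw [Fin.one_eq_zero_iff] at h1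
        omega
      refine ⟨a + 1, ha, fun h => hb h.symm, ?_⟩
      have := hconv a b (Ne.symm hab) hb
      rw [abs_pos]
      unfold cross at this ⊢
      intro h0
      linarith
  choose! c hca hcb hc using key
  have h1 : ∀ᶠ δ in nhdsWithin (0 : ℝ) (Set.Ioi 0), ∀ a b : Fin d, a ≠ b →
      δ < |cross (vP b - vP a) (vP (c a b) - vP a)| := by
    refine eventually_all.2 fun a => eventually_all.2 fun b => ?_
    by_cases hab : a = b
    · simp [hab]
    · exact (eventually_nhdsWithin_of_eventually_nhds (eventually_lt_nhds (hc a b hab))).mono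
        fun _ h _ => h
  obtain ⟨δ, hδ, hδ0⟩ := (h1.and self_mem_nhdsWithin).exists
  have h2 : ∀ᶠ w in nhds vP, ∀ a b : Fin d, a ≠ b →
      δ < |cross (w b - w a) (w (c a b) - w a)| := by
    refine eventually_all.2 fun a => eventually_all.2 fun b => ?_
    by_cases hab : a = b
    · simp [hab]
    · have hcont : Continuous fun w : Fin d → ℂ =>
          |cross (w b - w a) (w (c a b) - w a)| := by
        unfold cross
        fun_prop
      exact (hcont.continuousAt.eventually_const_lt (hδ a b hab)).mono fun _ h _ => h
  obtain ⟨η, hη, hball⟩ := Metric.eventually_nhds_iff_ball.1 h2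
  exact ⟨δ, hδ0, η, hη, fun w hw a b hab =>
    ⟨c a b, hca a b hab, hcb a b hab, hball w hw a b hab⟩⟩

/-- The core estimate. -/
lemma core {A B C : ℂ} {lam M R : ℝ} (h0 : 0 < lam) (h1 : lam < 1)
    (hA : ‖A‖ ≤ M) (hB : ‖B‖ ≤ M) (hC : ‖C‖ ≤ M) (Z : ℕ → ℂ) (hR : ‖Z 0‖ ≤ R) (m : ℕ)
    (hev : ∀ k ≤ m, Z (2 * k + 1) = -(lam : ℂ) * Z (2 * k) + (1 + (lam : ℂ)) * A)
    (hodd : ∀ k < m, Z (2 * k + 2) = -(lam : ℂ) * Z (2 * k + 1) + (1 + (lam : ℂ)) * B)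
    (c1 : 0 < cross (A - Z (2 * m)) (C - Z (2 * m)))
    (c2 : 0 < cross (B - Z (2 * m + 1)) (C - Z (2 * m + 1))) :
    |cross (B - A) (C - A)| ≤ lam ^ (2 * m) * (2 * (R + 3 * M) * (2 * M)) := by
  obtain ⟨U, hU⟩ : ∃ U : ℂ, U = (1 - (lam : ℂ)) * (Z 0 - A) - (B - A) := ⟨_, rfl⟩
  have hUn : ‖U‖ ≤ R + 3 * M := by
    have e1 : ‖(1 - (lam : ℂ))‖ ≤ 1 := by
      rw [← Complex.ofReal_one, ← Complex.ofReal_sub, Complex.norm_real, Real.norm_eq_abs,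
        abs_le]
      constructor <;> linarith
    have e2 : ‖Z 0 - A‖ ≤ R + M := (norm_sub_le _ _).trans (by linarith)
    have e3 : ‖B - A‖ ≤ M + M := (norm_sub_le _ _).trans (by linarith)
    have e4 : ‖(1 - (lam : ℂ)) * (Z 0 - A)‖ ≤ 1 * (R + M) := by
      rw [norm_mul]
      exact mul_le_mul e1 e2 (norm_nonneg _) zero_le_one
    rw [hU]
    exact (norm_sub_le _ _).trans (by linarith)
  have form : ∀ k ≤ m, (1 - (lam : ℂ)) * (Z (2 * k) - A) =
      (B - A) + ((lam ^ (2 * k) : ℝ) : ℂ) * U := by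
    intro k
    induction k with
    | zero => intro _; simp [hU]
    | succ k ih =>
      intro hk
      have i1 := ih (by omega)
      have i2 := hev k (by omega)
      have i3 := hodd k (by omega)
      rw [show 2 * (k + 1) = 2 * k + 2 by ring, i3, i2]
      push_cast at i1 ⊢
      rw [pow_add]
      linear_combination (lam : ℂ) ^ 2 * i1
  have f1 := form m le_rfl
  have g2 := hev m le_rfl
  have f2 : (1 - (lam : ℂ)) * (B - Z (2 * m + 1)) =
      (B - A) + ((lam * lam ^ (2 * m) : ℝ) : ℂ) * U := by
    rw [g2]
    push_cast at f1 ⊢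
    linear_combination (lam : ℂ) * f1
  have hl : 0 < 1 - lam := by linarith
  obtain ⟨t, ht⟩ : ∃ t : ℝ, t = lam ^ (2 * m) := ⟨_, rfl⟩
  have ht0 : 0 < t := by rw [ht]; positivity
  rw [← ht] at f1 f2 ⊢
  have k1 : (1 - lam) * cross (A - Z (2 * m)) (C - Z (2 * m)) =
      - cross (B - A) (C - A) - t * cross U (C - A) := by
    have r := congrArg Complex.re f1
    have i := congrArg Complex.im f1
    simp only [cross, Complex.sub_re, Complex.sub_im, Complex.add_re, Complex.add_im,
      Complex.mul_re, Complex.mul_im, Complex.ofReal_re,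
      Complex.ofReal_im, Complex.one_re, Complex.one_im] at r i ⊢
    linear_combination (C.re - A.re) * i - (C.im - A.im) * r
  have k2 : (1 - lam) * cross (B - Z (2 * m + 1)) (C - Z (2 * m + 1)) =
      cross (B - A) (C - A) + lam * t * cross U (C - B) := by
    have r := congrArg Complex.re f2
    have i := congrArg Complex.im f2
    simp only [cross, Complex.sub_re, Complex.sub_im, Complex.add_re, Complex.add_im,
      Complex.mul_re, Complex.mul_im, Complex.ofReal_re,
      Complex.ofReal_im, Complex.one_re, Complex.one_im] at r i ⊢
    linear_combination (C.im - B.im) * r - (C.re - B.re) * i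
  have p1 := mul_pos hl c1
  have p2 := mul_pos hl c2
  rw [k1] at p1
  rw [k2] at p2
  have bound : ∀ X : ℂ, ‖X‖ ≤ M → |cross U (C - X)| ≤ 2 * (R + 3 * M) * (2 * M) := by
    intro X hX
    have e : ‖C - X‖ ≤ 2 * M := (norm_sub_le _ _).trans (by linarith)
    refine (cross_abs_le _ _).trans ?_
    have := norm_nonneg U
    have := norm_nonneg (C - X)
    gcongr
    linarith
  have b1 := bound A hA
  have b2 := bound B hB
  have q1 : t * -cross U (C - A) ≤ t * (2 * (R + 3 * M) * (2 * M)) :=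
    mul_le_mul_of_nonneg_left ((neg_le_abs _).trans b1) ht0.le
  have q2 : lam * t * cross U (C - B) ≤ t * (2 * (R + 3 * M) * (2 * M)) := by
    calc lam * t * cross U (C - B) ≤ lam * t * (2 * (R + 3 * M) * (2 * M)) :=
          mul_le_mul_of_nonneg_left ((le_abs_self _).trans b2) (by positivity)
      _ ≤ 1 * t * (2 * (R + 3 * M) * (2 * M)) := by
          have : 0 ≤ 2 * (R + 3 * M) * (2 * M) := (abs_nonneg _).trans b2
          gcongr
      _ = _ := by ring
  rw [abs_le]
  constructor <;> linarith

/-- There is an integer `N ≥ 1` such that, for every sufficiently small `ε > 0`, every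
itinerary of `I_N^ε` contains at least 3 distinct symbols. -/
theorem itinerary_three_symbols (d : ℕ) [NeZero d] (hd : 3 ≤ d) (vP : Fin d → ℂ)
    (lP : ℝ) (hconv : IsConvexPolygon vP) (hl : lP ∈ Set.Ioo (0 : ℝ) 1) :
    ∃ N : ℕ, 1 ≤ N ∧ ∃ ε₀ : ℝ, 0 < ε₀ ∧ ∀ ε : ℝ, 0 < ε → ε < ε₀ →
      ∀ i ∈ ItinSet vP lP ε N, ∃ j₁ j₂ j₃ : Fin N,
        i j₁ ≠ i j₂ ∧ i j₂ ≠ i j₃ ∧ i j₁ ≠ i j₃ := by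
  obtain ⟨hl0, hl1⟩ := hl
  obtain ⟨δ, hδ, η, hη, hthird⟩ := exists_third hd vP hconv
  obtain ⟨q, hq⟩ : ∃ q : ℝ, q = (1 + lP) / 2 := ⟨_, rfl⟩
  have hq0 : 0 < q := by linarith
  have hq1 : q < 1 := by linarith
  obtain ⟨M, hM⟩ : ∃ M : ℝ, M = ‖vP‖ + 1 := ⟨_, rfl⟩
  have hM0 : 0 < M := by have := norm_nonneg vP; linarith
  obtain ⟨R, hR⟩ : ∃ R : ℝ, R = M * 2 / (1 - q) ^ 2 := ⟨_, rfl⟩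
  have hR0 : 0 < R := by
    have : 0 < 1 - q := by linarith
    rw [hR]; positivity
  obtain ⟨K, hK⟩ : ∃ K : ℝ, K = 2 * (R + 3 * M) * (2 * M) := ⟨_, rfl⟩
  have hK0 : 0 < K := by rw [hK]; positivity
  obtain ⟨m, hm⟩ := exists_pow_lt_of_lt_one (div_pos hδ hK0) hq1
  have hmK : q ^ (2 * m) * K < δ := by
    have h1 : q ^ (2 * m) ≤ q ^ m := pow_le_pow_of_le_one hq0.le hq1.le (by omega)
    have h2 : q ^ m * K < δ := (lt_div_iff₀ hK0).1 hm
    exact (mul_le_mul_of_nonneg_right h1 hK0.le).trans_lt h2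
  refine ⟨2 * m + 2, by omega, min (min η 1) (min lP ((1 - lP) / 2)), ?_, ?_⟩
  · have : 0 < (1 - lP) / 2 := by linarith
    positivity
  intro ε hε hε0 i hi
  simp only [lt_min_iff] at hε0
  obtain ⟨⟨hεη, hε1⟩, hεl, hεq⟩ := hε0
  obtain ⟨⟨w, lam⟩, ⟨hw, hlam⟩, z, hz⟩ := hi
  simp only at hw hlam hz
  have hlam0 : 0 < lam := by linarith [hlam.1]
  have hlamq : lam < q := by linarith [hlam.2]
  have normb : ∀ x ∈ Metric.ball vP ε, ‖x‖ ≤ M := by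
    intro x hx
    rw [Metric.mem_ball, dist_eq_norm] at hx
    have : ‖x‖ ≤ ‖x - vP‖ + ‖vP‖ := by simpa using norm_add_le (x - vP) vP
    linarith
  have hwM : ∀ k, ‖w k‖ ≤ M := fun k => (norm_le_pi_norm w k).trans (normb w hw)
  have hr : rEps vP lP ε ≤ R := by
    have hb : bEps vP ε ≤ M := by
      refine csSup_le ⟨_, vP, Metric.mem_ball_self hε, rfl⟩ ?_
      rintro _ ⟨x, hx, rfl⟩
      exact normb x hx
    have ha : aEps lP ε ≤ q := by unfold aEps; linarith
    have ha0 : 0 ≤ aEps lP ε := by unfold aEps; linarith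
    unfold rEps
    rw [hR]
    have hq' : 0 < 1 - q := by linarith
    apply div_le_div₀ (by positivity)
    · exact mul_le_mul hb (by linarith) (by linarith) hM0.le
    · positivity
    · exact pow_le_pow_left₀ hq'.le (by linarith) 2
  have third : ∀ a b : Fin d, a ≠ b → _ :=
    hthird w (Metric.ball_subset_ball hεη.le hw)
  -- the orbit and its symbols
  obtain ⟨Z, hZ⟩ : ∃ Z : ℕ → ℂ, Z = fun n => (billiardMap w lam)^[n] z := ⟨_, rfl⟩
  obtain ⟨s, hs⟩ : ∃ s : ℕ → Fin d, ∀ n (h : n < 2 * m + 2), s n = i ⟨n, h⟩ :=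
    ⟨fun n => if h : n < 2 * m + 2 then i ⟨n, h⟩ else 0, fun n h => by simp [h]⟩
  have hcone : ∀ n < 2 * m + 2, Z n ∈ cone w (s n) := by
    intro n h
    rw [hs n h, hZ]
    exact (hz ⟨n, h⟩).1
  have hZ0 : ‖Z 0‖ ≤ R := by
    have := (hz ⟨0, by omega⟩).2
    unfold Keps at this
    rw [mem_closedBall_zero_iff] at this
    rw [hZ]
    exact this.trans hr
  have hstep : ∀ n < 2 * m + 2, Z (n + 1) = -(lam : ℂ) * Z n + (1 + (lam : ℂ)) * w (s n) := by
    intro n h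
    rw [← billiardMap_eq lam (hcone n h), hZ]
    exact Function.iterate_succ_apply' _ _ _
  have hne : ∀ n, n + 1 < 2 * m + 2 → s n ≠ s (n + 1) := by
    intro n h heq
    obtain ⟨c, hc⟩ : ∃ c : Fin d, c ≠ s n := by
      have : Nontrivial (Fin d) := Fin.nontrivial_iff_two_le.2 (by omega)
      exact exists_ne _
    have h1 := hcone (n + 1) h
    rw [hstep n (by omega), ← heq] at h1
    exact consecutive_ne hc hlam0 (hcone n (by omega)) h1
  by_contra hcon
  have htwo : ∀ n₁ n₂ n₃ : ℕ, n₁ < 2 * m + 2 → n₂ < 2 * m + 2 → n₃ < 2 * m + 2 →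
      s n₁ ≠ s n₂ → s n₂ ≠ s n₃ → s n₁ = s n₃ := by
    intro n₁ n₂ n₃ h₁ h₂ h₃ h12 h23
    by_contra h13
    rw [hs _ h₁, hs _ h₂] at h12
    rw [hs _ h₂, hs _ h₃] at h23
    rw [hs _ h₁, hs _ h₃] at h13
    exact hcon ⟨_, _, _, h12, h23, h13⟩
  have halt : ∀ k ≤ m, s (2 * k) = s 0 ∧ s (2 * k + 1) = s 1 := by
    intro k
    induction k with
    | zero => intro _; simp
    | succ k ih =>
      intro hk
      obtain ⟨i1, i2⟩ := ih (by omega)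
      have e1 := htwo (2 * k) (2 * k + 1) (2 * k + 2) (by omega) (by omega) (by omega)
        (hne _ (by omega)) (hne _ (by omega))
      have e2 := htwo (2 * k + 1) (2 * k + 2) (2 * k + 3) (by omega) (by omega) (by omega)
        (hne _ (by omega)) (hne _ (by omega))
      exact ⟨e1.symm.trans i1, e2.symm.trans i2⟩
  have h01 : s 0 ≠ s 1 := hne 0 (by omega)
  obtain ⟨c, hca, hcb, hD⟩ := third _ _ h01
  have c1 := hcone (2 * m) (by omega)
  have c2 := hcone (2 * m + 1) (by omega)
  rw [(halt m le_rfl).1] at c1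
  rw [(halt m le_rfl).2] at c2
  have hfin := core hlam0 (hlamq.trans hq1) (hwM (s 0)) (hwM (s 1)) (hwM c) Z hZ0 m
    (fun k hk => by rw [hstep _ (by omega), (halt k hk).1])
    (fun k hk => by rw [hstep (2 * k + 1) (by omega), (halt k hk.le).2])
    (c1 c hca) (c2 c hcb)
  rw [← hK] at hfin
  have hpow : lam ^ (2 * m) * K ≤ q ^ (2 * m) * K :=
    mul_le_mul_of_nonneg_right (pow_le_pow_left₀ hlam0.le hlamq.le _) hK0.le
  linarith
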